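/- Let n jobs be given, where job j has processing time p_j ∈ ℕ and weight w_j ∈ ℕ, together with a set K ⊆ {1,…,n} × {1,…,n} of precedence constraints. For J ⊆ {1,…,n}, define OPT[J] ∈ ℕ∞ as the minimum of ∑_{j∈J} w_j·C_j(π) over all linear orderings π of J processed consecutively without idle time starting at time 0 that respect K on J (∞ if none exists). Then for every J ⊆ {1,…,n} of even cardinality, OPT[J] = min over all X ⊆ J with |X| = |J|/2 of ( OPT[X] + h(J,X) + OPT[J∖X] ), where h(J,X) = ∞ if there exist j ∈ J∖X and k ∈ X with (j,k) ∈ K, and h(J,X) = p(X) · ∑_{j∈J∖X} w_j otherwise, with p(X) = ∑_{k∈X} p_k. -/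

import Mathlib

/-- Total weighted completion time of the jobs in the list, processed consecutively
without idle time starting at time `t`, in the order given by the list. -/
def wcCost {n : ℕ} (p w : Fin n → ℕ) : ℕ → List (Fin n) → ℕ
  | _, [] => 0
  | t, j :: l => w j * (t + p j) + wcCost p w (t + p j) l

/-- The ordering `l` respects the precedence constraints `K` : whenever `(i, k) ∈ K`
and both jobs appear in `l`, job `i` precedes job `k` in `l`. -/
def Respects {n : ℕ} (K : Finset (Fin n × Fin n)) (l : List (Fin n)) : Prop :=
  ∀ i k : Fin n, (i, k) ∈ K → i ∈ l → k ∈ l → [i, k].Sublist l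

/-- `OPT p w K J` : minimum of `∑_{j ∈ J} w j * C j` over all orderings of `J`
processed consecutively without idle time starting at time `0` and respecting the
precedence constraints `K` (`⊤` if no such ordering exists). -/
noncomputable def OPT {n : ℕ} (p w : Fin n → ℕ) (K : Finset (Fin n × Fin n))
    (J : Finset (Fin n)) : ℕ∞ :=
  sInf { v : ℕ∞ | ∃ l : List (Fin n), l.Nodup ∧ l.toFinset = J ∧
    Respects K l ∧ v = (wcCost p w 0 l : ℕ∞) }

theorem List.pair_sublist_append_iff {α : Type*} {a b : α} {l₁ l₂ : List α} :
    [a, b].Sublist (l₁ ++ l₂) ↔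
      [a, b].Sublist l₁ ∨ (a ∈ l₁ ∧ b ∈ l₂) ∨ [a, b].Sublist l₂ := by
  constructor
  · intro h
    obtain ⟨u, v, huv, hu, hv⟩ := List.sublist_append_iff.mp h
    match u, huv with
    | [], huv => exact .inr (.inr (by simpa [huv] using hv))
    | [c], huv =>
      obtain ⟨rfl, rfl⟩ : a = c ∧ [b] = v := by simpa using huv
      exact .inr (.inl ⟨by simpa using hu, by simpa using hv⟩)
    | c :: d :: u, huv =>
      obtain ⟨rfl, rfl, rfl, -⟩ : a = c ∧ b = d ∧ u = [] ∧ v = [] := by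
        simpa using huv
      exact .inl hu
  · rintro (h | ⟨ha, hb⟩ | h)
    · exact h.trans (List.sublist_append_left _ _)
    · exact (List.singleton_sublist.mpr ha).append (List.singleton_sublist.mpr hb)
    · exact h.trans (List.sublist_append_right _ _)

section

variable {n : ℕ} {p w : Fin n → ℕ} {K : Finset (Fin n × Fin n)}

theorem wcCost_append (t : ℕ) (l₁ l₂ : List (Fin n)) :
    wcCost p w t (l₁ ++ l₂) = wcCost p w t l₁ + wcCost p w (t + (l₁.map p).sum) l₂ := by
  induction l₁ generalizing t with
  | nil => simp [wcCost]
  | cons j l ih => simp [wcCost, ih, add_assoc]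

theorem wcCost_eq_zero_start_add (t : ℕ) (l : List (Fin n)) :
    wcCost p w t l = wcCost p w 0 l + t * (l.map w).sum := by
  induction l generalizing t with
  | nil => simp [wcCost]
  | cons j l ih =>
    simp only [wcCost, List.map_cons, List.sum_cons]
    rw [ih (t + p j), ih (0 + p j)]
    ring

theorem respects_append_iff {l₁ l₂ : List (Fin n)} (h : l₁.Disjoint l₂) :
    Respects K (l₁ ++ l₂) ↔
      Respects K l₁ ∧ Respects K l₂ ∧ ∀ j ∈ l₂, ∀ k ∈ l₁, (j, k) ∉ K := by
  have mem_of_pair {i k : Fin n} {l : List (Fin n)} (hs : [i, k].Sublist l) :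
      i ∈ l ∧ k ∈ l := ⟨hs.subset (by simp), hs.subset (by simp)⟩
  have hd : ∀ i, i ∈ l₁ → i ∈ l₂ → False := fun i h₁ h₂ => h h₁ h₂
  simp only [Respects, List.pair_sublist_append_iff, List.mem_append]
  constructor
  · intro hr
    refine ⟨fun i k hik hi hk => ?_, fun i k hik hi hk => ?_, fun j hj k hk hjk => ?_⟩
    · rcases hr i k hik (.inl hi) (.inl hk) with hs | hs | hs
      · exact hs
      · exact (hd k hk hs.2).elim
      · exact (hd k hk (mem_of_pair hs).2).elim
    · rcases hr i k hik (.inr hi) (.inr hk) with hs | hs | hs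
      · exact (hd i (mem_of_pair hs).1 hi).elim
      · exact (hd i hs.1 hi).elim
      · exact hs
    · rcases hr j k hjk (.inr hj) (.inl hk) with hs | hs | hs
      · exact hd j (mem_of_pair hs).1 hj
      · exact hd j hs.1 hj
      · exact hd k hk (mem_of_pair hs).2
  · rintro ⟨h₁, h₂, hc⟩ i k hik (hi | hi) (hk | hk)
    · exact .inl (h₁ i k hik hi hk)
    · exact .inr (.inl ⟨hi, hk⟩)
    · exact (hc i hi k hk hik).elim
    · exact .inr (.inr (h₂ i k hik hi hk))

theorem OPT_le_wcCost {l : List (Fin n)} (hl : l.Nodup) (hr : Respects K l) :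
    OPT p w K l.toFinset ≤ (wcCost p w 0 l : ℕ∞) :=
  sInf_le ⟨l, hl, rfl, hr, rfl⟩

theorem exists_wcCost_eq_OPT {J : Finset (Fin n)} (h : OPT p w K J ≠ ⊤) :
    ∃ l : List (Fin n), l.Nodup ∧ l.toFinset = J ∧ Respects K l ∧
      OPT p w K J = (wcCost p w 0 l : ℕ∞) := by
  refine csInf_mem (s := { v : ℕ∞ | ∃ l : List (Fin n), l.Nodup ∧ l.toFinset = J ∧
    Respects K l ∧ v = (wcCost p w 0 l : ℕ∞) }) (Set.nonempty_iff_ne_empty.mpr fun he => h ?_)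
  rw [OPT, he, sInf_empty]

theorem wcCost_append_of_nodup {l₁ l₂ : List (Fin n)} (h₁ : l₁.Nodup) (h₂ : l₂.Nodup) :
    wcCost p w 0 (l₁ ++ l₂) = wcCost p w 0 l₁ +
      (∑ k ∈ l₁.toFinset, p k) * (∑ j ∈ l₂.toFinset, w j) + wcCost p w 0 l₂ := by
  rw [wcCost_append, wcCost_eq_zero_start_add (0 + _) l₂, List.sum_toFinset p h₁,
    List.sum_toFinset w h₂]
  ring

theorem List.toFinset_append_sdiff_left {α : Type*} [DecidableEq α] {l₁ l₂ : List α}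
    (h : l₁.Disjoint l₂) : (l₁ ++ l₂).toFinset \ l₁.toFinset = l₂.toFinset := by
  rw [List.toFinset_append,
    Finset.union_sdiff_cancel_left (List.disjoint_toFinset_iff_disjoint.mpr h)]

end

theorem stmt5 {n : ℕ} (p w : Fin n → ℕ) (K : Finset (Fin n × Fin n))
    (J : Finset (Fin n)) (hJ : Even J.card) :
    OPT p w K J =
      ⨅ (X : Finset (Fin n)) (_ : X ⊆ J ∧ X.card = J.card / 2),
        (OPT p w K X +
          (if ∃ j ∈ J \ X, ∃ k ∈ X, (j, k) ∈ K then ⊤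
            else (((∑ k ∈ X, p k) * ∑ j ∈ J \ X, w j : ℕ) : ℕ∞)) +
          OPT p w K (J \ X)) := by
  apply le_antisymm
  · refine le_iInf₂ fun X hX => ?_
    split_ifs with hc
    · simp
    by_cases h₁ : OPT p w K X = ⊤
    · simp [h₁]
    by_cases h₂ : OPT p w K (J \ X) = ⊤
    · simp [h₂]
    obtain ⟨l₁, hn₁, hl₁, hr₁, he₁⟩ := exists_wcCost_eq_OPT h₁
    obtain ⟨l₂, hn₂, hl₂, hr₂, he₂⟩ := exists_wcCost_eq_OPT h₂
    have hd : l₁.Disjoint l₂ := by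
      rw [← List.disjoint_toFinset_iff_disjoint, hl₁, hl₂]
      exact Finset.disjoint_sdiff
    have hr : Respects K (l₁ ++ l₂) := by
      refine (respects_append_iff hd).mpr ⟨hr₁, hr₂, fun j hj k hk hjk => hc ⟨j, ?_, k, ?_, hjk⟩⟩
      · rwa [← hl₂, List.mem_toFinset]
      · rwa [← hl₁, List.mem_toFinset]
    have hle := OPT_le_wcCost (p := p) (w := w) (hn₁.append hn₂ hd) hr
    rw [List.toFinset_append, hl₁, hl₂, Finset.union_sdiff_of_subset hX.1,
      wcCost_append_of_nodup hn₁ hn₂, hl₁, hl₂] at hle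
    rw [he₁, he₂]
    exact_mod_cast hle
  · refine le_sInf ?_
    rintro _ ⟨l, hn, rfl, hr, rfl⟩
    obtain ⟨l₁, l₂, rfl, hcard⟩ : ∃ l₁ l₂, l = l₁ ++ l₂ ∧ l₁.length = l.length / 2 :=
      ⟨l.take (l.length / 2), l.drop (l.length / 2), by simp, by simp; omega⟩
    obtain ⟨hn₁, hn₂, hd⟩ := List.nodup_append'.mp hn
    obtain ⟨hr₁, hr₂, hc⟩ := (respects_append_iff hd).mp hr
    have hX : l₁.toFinset ⊆ (l₁ ++ l₂).toFinset ∧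
        l₁.toFinset.card = (l₁ ++ l₂).toFinset.card / 2 :=
      ⟨by simp, by rw [List.toFinset_card_of_nodup hn₁, List.toFinset_card_of_nodup hn, hcard]⟩
    refine (iInf₂_le l₁.toFinset hX).trans ?_
    rw [List.toFinset_append_sdiff_left hd, if_neg, wcCost_append_of_nodup hn₁ hn₂]
    · push_cast
      gcongr
      · exact OPT_le_wcCost hn₁ hr₁
      · exact OPT_le_wcCost hn₂ hr₂
    · rintro ⟨j, hj, k, hk, hjk⟩
      exact hc j (List.mem_toFinset.mp hj) k (List.mem_toFinset.mp hk) hjk
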